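/- arXiv:2311.02547 — 2 statements merged into one kernel-verified Lean document; each statement's English description precedes it below -/
import Mathlib

section
/- Let w ≥ 4 be an even integer. Then Σ_{a+c=w−1, a≥2, c≥1, a even (hence c odd)} ζ(a,1,c) = (1/2)·ζ(2)·ζ(w−2) − (1/4)·ζ(w). -/
/-- The multiple zeta value `ζ(s₁,…,s_d) = Σ_{k₁>⋯>k_d≥1} 1/(k₁^{s₁}⋯k_d^{s_d})`. -/
noncomputable def mzv {d : ℕ} (s : Fin d → ℕ) : ℝ :=
  ∑' k : {k : Fin d → ℕ // StrictAnti k ∧ ∀ i, 0 < k i},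
    ∏ i, (1 : ℝ) / (k.1 i : ℝ) ^ s i

open Finset Filter Topology

/-!
With `w = 2n + 2`, summing a finite geometric progression over the even `a` turns the left-hand side
into `∑_{k>m>j} (j⁻²ⁿ - k⁻²ⁿ) K(k,m,j)`, where `K(k,m,j) = j / (m (k² - j²))`. Let `X(N)` be the sum
of `K` over the triples with bottom entry `j = N`, and `B(N)` its (finite) sum over the triples with
top entry `k = N`. Partial fractions and telescoping express both through harmonic numbers; the
convolution sums that occur are the same for both and cancel, which leaves
`X(N) = B(N) + ζ(2)/2 - 1/(4N²)`. Since `0 ≤ B(N) ≤ 1`, the series `∑ N⁻²ⁿ B(N)` converges, and so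
`∑ N⁻²ⁿ (X(N) - B(N)) = ζ(2)ζ(2n)/2 - ζ(2n+2)/4`.
-/

theorem hasSum_sigma_of_nonneg {ι : Type*} {γ : ι → Type*} {f : (Σ i, γ i) → ℝ} {g : ι → ℝ} {a : ℝ}
    (hf : ∀ x, 0 ≤ f x) (hrow : ∀ i, HasSum (fun c => f ⟨i, c⟩) (g i)) (hg : HasSum g a) :
    HasSum f a := by
  refine hg.sigma_of_hasSum hrow ((summable_sigma_of_nonneg hf).2 ⟨fun i => (hrow i).summable, ?_⟩)
  simpa only [(hrow _).tsum_eq] using hg.summable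

theorem sum_tsum_eq_of_hasSum_sum {ι β : Type*} {s : Finset ι} {f : ι → β → ℝ} {a : ℝ}
    (hf : ∀ i ∈ s, ∀ b, 0 ≤ f i b) (h : HasSum (fun b => ∑ i ∈ s, f i b) a) :
    ∑ i ∈ s, ∑' b, f i b = a := by
  rw [← h.tsum_eq, Summable.tsum_finsetSum]
  exact fun i hi => h.summable.of_nonneg_of_le (hf i hi) fun b =>
    single_le_sum (f := fun i => f i b) (fun i hi => hf i hi b) hi

/-- The index set of the series defining a multiple zeta value of depth `d`. -/
abbrev MZVIndex (d : ℕ) : Type := {k : Fin d → ℕ // StrictAnti k ∧ ∀ i, 0 < k i}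

theorem mzvIndex_three_lt (t : MZVIndex 3) : 0 < t.1 2 ∧ t.1 2 < t.1 1 ∧ t.1 1 < t.1 0 :=
  ⟨t.2.2 2, t.2.1 (by decide), t.2.1 (by decide)⟩

/-- The depth-three index `(k, m, j)`. -/
def mzvTriple (k m j : ℕ) (hj : 0 < j) (hm : j < m) (hk : m < k) : MZVIndex 3 :=
  ⟨![k, m, j], by simp [Fin.strictAnti_iff_succ_lt, hm, hk],
    by simp [Fin.forall_fin_succ, hj, hj.trans hm, (hj.trans hm).trans hk]⟩

theorem mzvTriple_eq {k m j : ℕ} {t : MZVIndex 3} (hk : k = t.1 0) (hm : m = t.1 1)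
    (hj : j = t.1 2) (hj0 : 0 < j) (hjm : j < m) (hmk : m < k) :
    mzvTriple k m j hj0 hjm hmk = t := by
  ext i
  fin_cases i
  exacts [hk, hm, hj]

/-- The depth-three indices `k > m > j`, parametrised by `j - 1` and the gaps `m - j - 1`,
`k - m - 1`, so that a sum can be organised by its bottom entry. -/
def gapEquiv : (Σ _ : ℕ, Σ _ : ℕ, ℕ) ≃ MZVIndex 3 where
  toFun x := mzvTriple (x.1 + 1 + x.2.1 + x.2.2 + 2) (x.1 + 1 + x.2.1 + 1) (x.1 + 1)
    (by omega) (by omega) (by omega)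
  invFun t := ⟨t.1 2 - 1, t.1 1 - t.1 2 - 1, t.1 0 - t.1 1 - 1⟩
  left_inv := by
    rintro ⟨j, p, q⟩
    simp only [mzvTriple, Matrix.cons_val, Sigma.mk.injEq, heq_eq_eq]
    omega
  right_inv t := by
    have := mzvIndex_three_lt t
    apply mzvTriple_eq <;> grind

/-- The depth-three indices `k > m > j`, parametrised by their entries minus one, so that a sum can
be organised by its top entry. -/
def nestedEquiv : (Σ k : ℕ, Σ m : Fin k, Fin m) ≃ MZVIndex 3 where
  toFun x := mzvTriple (x.1 + 1) (x.2.1 + 1) (x.2.2 + 1) (by omega) (by omega) (by omega)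
  invFun t := ⟨t.1 0 - 1, ⟨t.1 1 - 1, by have := mzvIndex_three_lt t; omega⟩,
    ⟨t.1 2 - 1, by have := mzvIndex_three_lt t; dsimp only; omega⟩⟩
  left_inv _ := rfl
  right_inv t := by
    have := mzvIndex_three_lt t
    apply mzvTriple_eq <;> grind

/-- The positive integers as depth-one indices, with `n` standing for `n + 1`. -/
def singleEquiv : ℕ ≃ MZVIndex 1 where
  toFun n := ⟨![n + 1], Subsingleton.strictAnti _, by simp⟩
  invFun k := k.1 0 - 1
  left_inv _ := rfl
  right_inv k := by
    ext i
    rw [Subsingleton.elim i 0]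
    exact Nat.sub_add_cancel (k.2.2 0)

theorem hasSum_mzv_singleton {s : ℕ} (hs : 1 < s) :
    HasSum (fun i : ℕ => 1 / ((i : ℝ) + 1) ^ s) (mzv ![s]) := by
  have summable : Summable fun i : ℕ => 1 / ((i : ℝ) + 1) ^ s := by
    simpa using (summable_nat_add_iff 1).2 (Real.summable_one_div_nat_pow.2 hs)
  have value : mzv ![s] = ∑' i : ℕ, 1 / ((i : ℝ) + 1) ^ s := by
    calc mzv ![s] = ∑' i : ℕ, ∏ l, 1 / ((![i + 1] l : ℕ) : ℝ) ^ ![s] l :=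
          (singleEquiv.tsum_eq _).symm
      _ = ∑' i : ℕ, 1 / ((i : ℝ) + 1) ^ s := by simp
  exact value ▸ summable.hasSum

/-- The factor left when the finite geometric progression over even exponents of `k` is summed: for
`j < k`, `∑_{i<n} k^{-(2i+2)} m⁻¹ j^{-(2(n-1-i)+1)} = (j⁻²ⁿ - k⁻²ⁿ) * mzvKernel k m j`. -/
noncomputable def mzvKernel (k m j : ℕ) : ℝ := j / (m * ((k : ℝ) ^ 2 - (j : ℝ) ^ 2))

/-- The sum of `mzvKernel N m j` over `N > m > j ≥ 1`; the range of summation also admits `j = 0`,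
where the kernel vanishes. -/
noncomputable def mzvKernelSum (N : ℕ) : ℝ := ∑ m ∈ range N, ∑ j ∈ range m, mzvKernel N m j

theorem mzvKernel_nonneg {k j : ℕ} (m : ℕ) (h : j ≤ k) : 0 ≤ mzvKernel k m j := by
  have : (0 : ℝ) ≤ (k : ℝ) ^ 2 - (j : ℝ) ^ 2 := sub_nonneg.2 (by gcongr)
  unfold mzvKernel
  positivity

theorem two_mul_mzvKernel {k j : ℕ} (m : ℕ) (h : j < k) :
    2 * mzvKernel k m j = (1 / ((k : ℝ) - j) - 1 / ((k : ℝ) + j)) / m := by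
  have hjk : (j : ℝ) < k := by exact_mod_cast h
  have hsub : (k : ℝ) - j ≠ 0 := (sub_pos.2 hjk).ne'
  have hadd : (k : ℝ) + j ≠ 0 := by linarith [j.cast_nonneg (α := ℝ)]
  rw [mzvKernel, sq_sub_sq]
  field_simp
  ring

theorem mzvKernelSum_nonneg (N : ℕ) : 0 ≤ mzvKernelSum N :=
  sum_nonneg fun m hm => sum_nonneg fun j hj => mzvKernel_nonneg m (by grind)

theorem mzvKernel_le {k m j : ℕ} (hjm : j < m) (hmk : m < k) :
    mzvKernel k m j ≤ 1 / (k * ((k : ℝ) - j)) := by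
  have hjk : (j : ℝ) < k := by exact_mod_cast hjm.trans hmk
  have hk0 : (0 : ℝ) < k := by exact_mod_cast hmk.pos
  have hm : (j : ℝ) ≤ m := by exact_mod_cast hjm.le
  have hm0 : (0 : ℝ) < m := by exact_mod_cast hjm.pos
  rw [mzvKernel, sq_sub_sq, ← div_div]
  refine div_le_div₀ zero_le_one (div_le_one_of_le₀ hm hm0.le)
    (mul_pos hk0 (sub_pos.2 hjk)) (mul_le_mul_of_nonneg_right ?_ (sub_pos.2 hjk).le)
  exact le_add_of_nonneg_right j.cast_nonneg

theorem mzvKernelSum_le_one (N : ℕ) : mzvKernelSum N ≤ 1 := by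
  have column (j : ℕ) (hj : j ∈ Ico 0 N) : ∑ m ∈ Ico (j + 1) N, mzvKernel N m j ≤ 1 / N := by
    have hjN : (j : ℝ) < N := by exact_mod_cast (mem_Ico.1 hj).2
    have hsub : (0 : ℝ) < N - j := sub_pos.2 hjN
    have hN : (0 : ℝ) < N := j.cast_nonneg.trans_lt hjN
    calc ∑ m ∈ Ico (j + 1) N, mzvKernel N m j
        ≤ ∑ m ∈ Ico (j + 1) N, 1 / (N * ((N : ℝ) - j)) :=
          sum_le_sum fun m hm => mzvKernel_le (by grind) (by grind)
      _ = (N - (j + 1) : ℝ) * (1 / (N * ((N : ℝ) - j))) := by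
          rw [sum_const, Nat.card_Ico, nsmul_eq_mul, Nat.cast_sub (by grind)]
          push_cast
          rfl
      _ ≤ (N - j : ℝ) * (1 / (N * ((N : ℝ) - j))) := by gcongr; linarith
      _ = 1 / N := by field_simp
  calc mzvKernelSum N = ∑ j ∈ Ico 0 N, ∑ m ∈ Ico (j + 1) N, mzvKernel N m j := by
        rw [sum_Ico_Ico_comm']
        simp only [mzvKernelSum, range_eq_Ico]
    _ ≤ ∑ j ∈ Ico 0 N, 1 / (N : ℝ) := sum_le_sum column
    _ ≤ 1 := by simpa using mul_inv_le_one

theorem mzvKernelSum_succ_eq_sum_fin (K : ℕ) :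
    mzvKernelSum (K + 1) = ∑ m : Fin K, ∑ j : Fin m, mzvKernel (K + 1) (m + 1) (j + 1) := by
  have inner (m : Fin K) : ∑ j : Fin m, mzvKernel (K + 1) (m + 1) (j + 1)
      = ∑ j ∈ range m, mzvKernel (K + 1) (m + 1) (j + 1) :=
    Fin.sum_univ_eq_sum_range (fun j => mzvKernel (K + 1) (m + 1) (j + 1)) m
  rw [sum_congr rfl fun m _ => inner m,
    Fin.sum_univ_eq_sum_range fun m => ∑ j ∈ range m, mzvKernel (K + 1) (m + 1) (j + 1)]
  simp [mzvKernelSum, sum_range_succ', mzvKernel]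

section Harmonic

local notation "H(" n ")" => ((harmonic n : ℚ) : ℝ)

theorem cast_harmonic_succ (n : ℕ) : H(n + 1) = H(n) + 1 / ((n : ℝ) + 1) := by
  simp [harmonic_succ]

theorem sum_range_one_div_add (a n : ℕ) :
    ∑ i ∈ range n, 1 / ((i : ℝ) + a + 1) = H(a + n) - H(a) := by
  induction n with
  | zero => simp
  | succ n ih =>
    rw [sum_range_succ, ih, ← add_assoc, cast_harmonic_succ]
    push_cast
    ring

theorem sum_range_one_div_add_one (n : ℕ) : ∑ i ∈ range n, 1 / ((i : ℝ) + 1) = H(n) := by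
  simpa using sum_range_one_div_add 0 n

theorem sum_range_one_div_sub {m n : ℕ} (h : m ≤ n) :
    ∑ i ∈ range m, 1 / ((n : ℝ) - i) = H(n) - H(n - m) := by
  obtain ⟨a, rfl⟩ := Nat.exists_eq_add_of_le' h
  rw [Nat.add_sub_cancel, ← sum_range_one_div_add, ← sum_range_reflect]
  refine sum_congr rfl fun i hi => ?_
  rw [Nat.sub_sub, Nat.cast_sub (by grind)]
  push_cast
  ring

theorem two_mul_sum_range_harmonic_div (n : ℕ) :
    2 * ∑ r ∈ range n, H(r + 1) / ((r : ℝ) + 1)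
      = H(n) ^ 2 + ∑ r ∈ range n, 1 / ((r : ℝ) + 1) ^ 2 := by
  induction n with
  | zero => simp
  | succ n ih =>
    rw [sum_range_succ, sum_range_succ, mul_add, ih, cast_harmonic_succ]
    field_simp
    ring

theorem hasSum_sub_shift {f : ℕ → ℝ} (hf : Antitone f) (h0 : Tendsto f atTop (𝓝 0)) (r : ℕ) :
    HasSum (fun i => f i - f (i + r)) (∑ i ∈ range r, f i) := by
  rw [hasSum_iff_tendsto_nat_of_nonneg fun i => sub_nonneg.2 (hf (Nat.le_add_right i r))]
  have partial_sum (n : ℕ) : ∑ i ∈ range n, (f i - f (i + r))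
      = ∑ i ∈ range r, f i - ∑ i ∈ range r, f (n + i) := by
    have := sum_range_add f n r
    have := sum_range_add f r n
    simp only [sum_sub_distrib, add_comm n, add_comm _ r] at *
    linarith
  have tail : Tendsto (fun n => ∑ i ∈ range r, f (n + i)) atTop (𝓝 0) := by
    simpa using tendsto_finsetSum (range r) fun i _ => (tendsto_add_atTop_iff_nat i).2 h0
  simpa [partial_sum] using tail.const_sub (∑ i ∈ range r, f i)

theorem hasSum_one_div_sub_one_div (c r : ℕ) :
    HasSum (fun i : ℕ => 1 / ((i : ℝ) + c + 1) - 1 / ((i : ℝ) + c + r + 1))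
      (H(c + r) - H(c)) := by
  rw [← sum_range_one_div_add]
  have anti : Antitone fun i : ℕ => 1 / ((i : ℝ) + c + 1) := fun i j hij => by
    dsimp only; gcongr
  have lim : Tendsto (fun i : ℕ => 1 / ((i : ℝ) + c + 1)) atTop (𝓝 0) := by
    simpa using (tendsto_add_atTop_iff_nat c).2 (tendsto_one_div_add_atTop_nhds_zero_nat (𝕜 := ℝ))
  convert hasSum_sub_shift anti lim r using 4 with i
  push_cast
  ring

theorem hasSum_one_div_mul (c r : ℕ) (hr : r ≠ 0) :
    HasSum (fun i : ℕ => 1 / (((i : ℝ) + c + 1) * ((i : ℝ) + c + r + 1)))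
      ((H(c + r) - H(c)) / r) := by
  refine ((hasSum_one_div_sub_one_div c r).div_const (r : ℝ)).congr_fun fun i => ?_
  field_simp
  ring

theorem hasSum_harmonic_sub_div (N : ℕ) :
    HasSum (fun i : ℕ => (H(i + 1 + N) - H(i + 1)) / ((i : ℝ) + 1))
      (∑ r ∈ range N, H(r + 1) / ((r : ℝ) + 1)) := by
  have column (r : ℕ) : HasSum (fun i : ℕ => 1 / ((r : ℝ) + (i + 1 : ℕ) + 1) / ((i : ℝ) + 1))
      (H(r + 1) / ((r : ℝ) + 1)) := by
    convert hasSum_one_div_mul 0 (r + 1) r.succ_ne_zero using 2 with i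
    · rw [div_div]
      push_cast
      ring
    · simp
    · exact (Nat.cast_succ r).symm
  refine (hasSum_sum fun r _ => column r).congr_fun fun i => ?_
  rw [← sum_range_one_div_add, sum_div]

theorem hasSum_harmonic_sub_div_shift (J : ℕ) :
    HasSum (fun i : ℕ => (H(i + 1 + (J + 1)) - H(i + 1)) / ((i : ℝ) + (J + 1) + 1))
      (∑ r ∈ range J, (H(J + 1) - H(J - r)) / ((r : ℝ) + 1)
        + (mzv ![2] - ∑ r ∈ range (J + 1), 1 / ((r : ℝ) + 1) ^ 2)) := by
  have column (r : ℕ) (hr : r ∈ range J) :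
      HasSum (fun i : ℕ => 1 / (((i + 1 + J : ℕ) : ℝ) - r) / ((i : ℝ) + (J + 1) + 1))
        ((H(J + 1) - H(J - r)) / ((r : ℝ) + 1)) := by
    have hrJ : r ≤ J := (mem_range.1 hr).le
    convert hasSum_one_div_mul (J - r) (r + 1) r.succ_ne_zero using 2 with i
    · rw [div_div]
      push_cast [hrJ]
      ring
    · grind
    · exact (Nat.cast_succ r).symm
  have diagonal := (hasSum_nat_add_iff' (J + 1)).2 (hasSum_mzv_singleton one_lt_two)
  refine ((hasSum_sum column).add diagonal).congr_fun fun i => ?_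
  rw [← sum_div, sum_range_one_div_sub (Nat.le_add_left J _), Nat.add_sub_cancel, ← add_assoc,
    cast_harmonic_succ]
  push_cast
  field_simp
  ring

theorem hasSum_mzvKernel_row (N p : ℕ) :
    HasSum (fun q : ℕ => mzvKernel (N + p + q + 2) (N + p + 1) N)
      ((H(p + 1 + 2 * N) - H(p + 1)) / ((p : ℝ) + N + 1) / 2) := by
  have h := ((hasSum_one_div_sub_one_div (p + 1) (2 * N)).div_const ((p : ℝ) + N + 1)).div_const 2
  refine h.congr_fun fun q => ?_
  rw [eq_div_iff two_ne_zero, mul_comm, two_mul_mzvKernel _ (by omega)]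
  push_cast
  congr 1 <;> ring

theorem two_mul_mzvKernelSum_succ (J : ℕ) :
    2 * mzvKernelSum (J + 1)
      = ∑ i ∈ range J, (H(J) + H(J + 1) - H(J - i) - H(J + 1 + i)) / ((i : ℝ) + 1) := by
  rw [mzvKernelSum, sum_range_succ', range_zero, sum_empty, add_zero, mul_sum]
  refine sum_congr rfl fun i hi => ?_
  have hiJ : i < J := mem_range.1 hi
  have row : ∀ j ∈ range (i + 1), 2 * mzvKernel (J + 1) (i + 1) j
      = (1 / (((J + 1 : ℕ) : ℝ) - j) - 1 / ((j : ℝ) + J + 1)) / ((i : ℝ) + 1) := fun j hj => by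
    rw [two_mul_mzvKernel _ (by grind)]
    push_cast
    ring
  rw [mul_sum, sum_congr rfl row, ← sum_div, sum_sub_distrib, sum_range_one_div_sub (by omega),
    sum_range_one_div_add, Nat.add_sub_add_right, show J + (i + 1) = J + 1 + i by ring]
  ring

theorem sum_range_one_div_mul_add (J : ℕ) :
    ∑ i ∈ range J, 1 / (((i : ℝ) + 1) * ((J : ℝ) + 1 + i + 1))
      = (H(J) + H(J + 1) - H(J + 1 + J)) / ((J : ℝ) + 1) := by
  rw [add_sub_assoc, ← neg_sub, ← sum_range_one_div_add, ← sum_range_one_div_add_one J,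
    ← sub_eq_add_neg, ← sum_sub_distrib, sum_div]
  refine sum_congr rfl fun i _ => ?_
  push_cast
  field_simp
  ring

theorem sum_harmonic_div_add_two_mul_mzvKernelSum (J : ℕ) :
    ∑ i ∈ range J, H(i + 1 + (J + 1)) / ((i : ℝ) + 1)
        - ∑ r ∈ range J, (H(J + 1) - H(J - r)) / ((r : ℝ) + 1) + 2 * mzvKernelSum (J + 1)
      = H(J) ^ 2 + (H(J) + H(J + 1) - H(J + 1 + J)) / ((J : ℝ) + 1) := by
  have square : H(J) ^ 2 = ∑ i ∈ range J, H(J) * (1 / ((i : ℝ) + 1)) := by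
    rw [← mul_sum, sum_range_one_div_add_one, pow_two]
  rw [two_mul_mzvKernelSum_succ, ← sum_range_one_div_mul_add, square, ← sum_sub_distrib,
    ← sum_add_distrib, ← sum_add_distrib]
  refine sum_congr rfl fun i _ => ?_
  rw [show i + 1 + (J + 1) = J + 1 + i + 1 by ring, cast_harmonic_succ (J + 1 + i)]
  push_cast
  field_simp
  ring

theorem harmonic_sums_eq_two_mul_mzvKernelSum (J : ℕ) :
    ∑ r ∈ range (J + 1), H(r + 1) / ((r : ℝ) + 1)
        - ∑ i ∈ range (J + 1), (H(i + 1 + (J + 1)) - H(i + 1)) / ((i : ℝ) + 1)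
        + (∑ r ∈ range J, (H(J + 1) - H(J - r)) / ((r : ℝ) + 1)
          + (mzv ![2] - ∑ r ∈ range (J + 1), 1 / ((r : ℝ) + 1) ^ 2))
      = 2 * mzvKernelSum (J + 1) + mzv ![2] - 1 / (2 * ((J : ℝ) + 1) ^ 2) := by
  have squares := two_mul_sum_range_harmonic_div (J + 1)
  have cancel := sum_harmonic_div_add_two_mul_mzvKernelSum J
  have split : ∑ i ∈ range (J + 1), (H(i + 1 + (J + 1)) - H(i + 1)) / ((i : ℝ) + 1)
      = ∑ i ∈ range J, H(i + 1 + (J + 1)) / ((i : ℝ) + 1) + H(J + 1 + J + 1) / ((J : ℝ) + 1)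
        - ∑ r ∈ range (J + 1), H(r + 1) / ((r : ℝ) + 1) := by
    simp only [sub_div, sum_sub_distrib]
    rw [sum_range_succ, ← add_assoc (J + 1)]
  have boundary : H(J + 1) ^ 2 - H(J) ^ 2 - (H(J) + H(J + 1) - H(J + 1 + J)) / ((J : ℝ) + 1)
      - H(J + 1 + J + 1) / ((J : ℝ) + 1) = -(1 / (2 * ((J : ℝ) + 1) ^ 2)) := by
    rw [cast_harmonic_succ (J + 1 + J), cast_harmonic_succ J]
    push_cast
    field_simp
    ring
  linarith

theorem hasSum_harmonic_sub_div_upper (J : ℕ) :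
    HasSum (fun p : ℕ => (H(p + 1 + 2 * (J + 1)) - H(p + 1)) / ((p : ℝ) + (J + 1) + 1))
      (2 * mzvKernelSum (J + 1) + mzv ![2] - 1 / (2 * ((J : ℝ) + 1) ^ 2)) := by
  have tail := (hasSum_nat_add_iff' (J + 1)).2 (hasSum_harmonic_sub_div (J + 1))
  rw [← harmonic_sums_eq_two_mul_mzvKernelSum]
  refine (tail.add (hasSum_harmonic_sub_div_shift J)).congr_fun fun p => ?_
  rw [show p + (J + 1) + 1 + (J + 1) = p + 1 + 2 * (J + 1) by ring,
    show p + (J + 1) + 1 = p + 1 + (J + 1) by ring]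
  push_cast
  ring

end Harmonic

theorem hasSum_mzvKernel_upper (J : ℕ) :
    HasSum (fun x : Σ _ : ℕ, ℕ => mzvKernel (J + 1 + x.1 + x.2 + 2) (J + 1 + x.1 + 1) (J + 1))
      (mzvKernelSum (J + 1) + mzv ![2] / 2 - 1 / (4 * ((J : ℝ) + 1) ^ 2)) := by
  refine hasSum_sigma_of_nonneg (fun _ => mzvKernel_nonneg _ (by omega))
    (fun p => hasSum_mzvKernel_row (J + 1) p) ?_
  have total := (hasSum_harmonic_sub_div_upper J).div_const 2
  rw [sub_div, add_div, mul_div_cancel_left₀ _ two_ne_zero, div_div,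
    show 2 * ((J : ℝ) + 1) ^ 2 * 2 = 4 * ((J : ℝ) + 1) ^ 2 by ring] at total
  simpa only [Nat.cast_succ] using total

theorem hasSum_mzvKernel_of_bottom {g : ℕ → ℝ} {a : ℝ} (hg : ∀ j, 0 ≤ g j)
    (h : HasSum (fun J : ℕ => g (J + 1) *
      (mzvKernelSum (J + 1) + mzv ![2] / 2 - 1 / (4 * ((J : ℝ) + 1) ^ 2))) a) :
    HasSum (fun t : MZVIndex 3 => g (t.1 2) * mzvKernel (t.1 0) (t.1 1) (t.1 2)) a := by
  rw [← gapEquiv.hasSum_iff]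
  refine hasSum_sigma_of_nonneg (fun x => ?_)
    (fun J => (hasSum_mzvKernel_upper J).mul_left (g (J + 1))) h
  have := mzvIndex_three_lt (gapEquiv x)
  exact mul_nonneg (hg _) (mzvKernel_nonneg _ (by omega))

theorem hasSum_mzvKernel_of_top {g : ℕ → ℝ} {a : ℝ} (hg : ∀ k, 0 ≤ g k)
    (h : HasSum (fun K : ℕ => g (K + 1) * mzvKernelSum (K + 1)) a) :
    HasSum (fun t : MZVIndex 3 => g (t.1 0) * mzvKernel (t.1 0) (t.1 1) (t.1 2)) a := by
  rw [← nestedEquiv.hasSum_iff]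
  refine hasSum_sigma_of_nonneg (fun x => ?_) (fun K => ?_) h
  · have := mzvIndex_three_lt (nestedEquiv x)
    exact mul_nonneg (hg _) (mzvKernel_nonneg _ (by omega))
  · rw [mzvKernelSum_succ_eq_sum_fin, ← Fintype.sum_sigma']
    exact (hasSum_fintype _).mul_left _

theorem sum_filter_even_Icc {M : Type*} [AddCommMonoid M] (n : ℕ) (f : ℕ → M) :
    ∑ a ∈ (Icc 2 (2 * n)).filter (fun a => Even a), f a = ∑ i ∈ range n, f (2 * i + 2) := by
  have image_eq : (Icc 2 (2 * n)).filter (fun a => Even a)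
      = (range n).image (fun i => 2 * i + 2) := by
    ext a
    simp only [mem_filter, mem_Icc, mem_image, mem_range]
    exact ⟨fun ⟨_, b, _⟩ => ⟨b - 1, by omega, by omega⟩,
      fun ⟨i, _, _⟩ => ⟨by omega, i + 1, by omega⟩⟩
  rw [image_eq, sum_image fun _ _ _ _ h => by omega]

theorem sum_range_even_odd_eq_mzvKernel (n m : ℕ) {k j : ℕ} (hj : 0 < j) (hjk : j < k) :
    ∑ i ∈ range n, 1 / (k : ℝ) ^ (2 * i + 2) * (1 / (m : ℝ)) * (1 / (j : ℝ) ^ (2 * (n - 1 - i) + 1))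
      = 1 / (j : ℝ) ^ (2 * n) * mzvKernel k m j - 1 / (k : ℝ) ^ (2 * n) * mzvKernel k m j := by
  have hk : k ≠ 0 := by omega
  have hlt : (j : ℝ) ^ 2 < (k : ℝ) ^ 2 := by gcongr
  have hne : (k : ℝ) ^ 2 - (j : ℝ) ^ 2 ≠ 0 := (sub_pos.2 hlt).ne'
  have hne' : (j : ℝ) ^ 2 - (k : ℝ) ^ 2 ≠ 0 := (sub_neg.2 hlt).ne
  have hinv : ((k : ℝ) ^ 2)⁻¹ ≠ ((j : ℝ) ^ 2)⁻¹ := fun h => hlt.ne' (inv_injective h)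
  calc ∑ i ∈ range n, 1 / (k : ℝ) ^ (2 * i + 2) * (1 / (m : ℝ)) *
          (1 / (j : ℝ) ^ (2 * (n - 1 - i) + 1))
      = 1 / ((k : ℝ) ^ 2 * m * j) *
          ∑ i ∈ range n, ((k : ℝ) ^ 2)⁻¹ ^ i * ((j : ℝ) ^ 2)⁻¹ ^ (n - 1 - i) := by
        rw [mul_sum]
        refine sum_congr rfl fun i _ => ?_
        simp only [pow_add, pow_mul, inv_pow]
        field_simp
    _ = _ := by
        rw [geom₂_sum hinv, mzvKernel]
        simp only [pow_mul, inv_pow]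
        field_simp
        ring

theorem summable_one_div_pow_mul_mzvKernelSum {s : ℕ} (hs : 1 < s) :
    Summable fun K : ℕ => 1 / ((K + 1 : ℕ) : ℝ) ^ s * mzvKernelSum (K + 1) := by
  refine (hasSum_mzv_singleton hs).summable.of_nonneg_of_le
    (fun K => mul_nonneg (by positivity) (mzvKernelSum_nonneg _)) fun K => ?_
  rw [Nat.cast_succ]
  exact mul_le_of_le_one_right (by positivity) (mzvKernelSum_le_one _)

theorem hasSum_mzvKernel_bottom_sub_top {s : ℕ} (hs : 1 < s) :
    HasSum (fun t : MZVIndex 3 => 1 / (t.1 2 : ℝ) ^ s * mzvKernel (t.1 0) (t.1 1) (t.1 2)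
        - 1 / (t.1 0 : ℝ) ^ s * mzvKernel (t.1 0) (t.1 1) (t.1 2))
      (1 / 2 * mzv ![2] * mzv ![s] - 1 / 4 * mzv ![s + 2]) := by
  have weight_nonneg (j : ℕ) : 0 ≤ 1 / (j : ℝ) ^ s := by positivity
  have lower := (summable_one_div_pow_mul_mzvKernelSum hs).hasSum
  have gap := ((hasSum_mzv_singleton hs).mul_left (1 / 2 * mzv ![2])).sub
    ((hasSum_mzv_singleton (s := s + 2) (by omega)).mul_left (1 / 4))
  have upper := (lower.add gap).congr_fun (g := fun J : ℕ => 1 / ((J + 1 : ℕ) : ℝ) ^ s *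
      (mzvKernelSum (J + 1) + mzv ![2] / 2 - 1 / (4 * ((J : ℝ) + 1) ^ 2))) fun J => by
    push_cast
    field_simp
    ring
  have bottom := hasSum_mzvKernel_of_bottom weight_nonneg upper
  have top := hasSum_mzvKernel_of_top weight_nonneg lower
  simpa only [add_sub_cancel_left] using bottom.sub top

theorem sum_even_prod_eq_mzvKernel (n : ℕ) (t : MZVIndex 3) :
    ∑ a ∈ (Icc 2 (2 * n)).filter (fun a => Even a),
        ∏ i, (1 : ℝ) / (t.1 i : ℝ) ^ ![a, 1, 2 * n + 1 - a] i
      = 1 / (t.1 2 : ℝ) ^ (2 * n) * mzvKernel (t.1 0) (t.1 1) (t.1 2)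
        - 1 / (t.1 0 : ℝ) ^ (2 * n) * mzvKernel (t.1 0) (t.1 1) (t.1 2) := by
  obtain ⟨bottom_pos, bottom_lt, lt_top⟩ := mzvIndex_three_lt t
  rw [sum_filter_even_Icc,
    ← sum_range_even_odd_eq_mzvKernel n (t.1 1) bottom_pos (bottom_lt.trans lt_top)]
  refine sum_congr rfl fun i hi => ?_
  have exponent : 2 * n + 1 - (2 * i + 2) = 2 * (n - 1 - i) + 1 := by grind
  simp only [Fin.prod_univ_three, Matrix.cons_val, pow_one, exponent]

theorem sum_a1c_a_even (w : ℕ) (hw : 4 ≤ w) (hew : Even w) :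
    (∑ a ∈ (Finset.Icc 2 (w - 2)).filter (fun a => Even a), mzv ![a, 1, w - 1 - a])
    = (1 / 2) * mzv ![2] * mzv ![w - 2] - (1 / 4) * mzv ![w] := by
  obtain ⟨n, rfl⟩ : ∃ n, w = 2 * n + 2 := ⟨w / 2 - 1, by grind⟩
  rw [show 2 * n + 2 - 2 = 2 * n by omega, show 2 * n + 2 - 1 = 2 * n + 1 by omega]
  refine sum_tsum_eq_of_hasSum_sum (fun a _ t => by positivity) ?_
  exact (hasSum_mzvKernel_bottom_sub_top (by omega)).congr_fun (sum_even_prod_eq_mzvKernel n)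
end

section
/- Let u ≥ 3 be an integer and q = u−1. Then (i) Σ_{a+b=u, a≥2, b≥1} ζ(a,b,2) = ζ(u,2) + ζ(q,3) − ζ(q,2,1), and (ii) Σ_{b+c=u, b≥1, c≥1} ζ(2,b,c) = ζ(3,q) + ζ(2,u). -/
/-!
Both identities are cases of Hoffman's relation in depth two,
`∑_{a=2}^{s} ζ(a, s+1-a, t) + ∑_{b=2}^{t} ζ(s, b, t+1-b) = ζ(s+1, t) + ζ(s, t+1)`,
namely `(s, t) = (q, 2)` and `(s, t) = (2, q)`. Both sums on the left are geometric in the exponent.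
Up to the boundary terms `ζ(s, 1, t) + ζ(s, t, 1)`, summing the first one gives telescoping series
minus `∑_{k>m>n} 1 / (kˢ nᵗ (k-m))`, and summing the second one gives `∑_{k>m>n} 1 / (kˢ nᵗ (m-n))`,
which is the same series by the reflection `m ↦ n + k - m`. Everything is done in `[0, ∞]`, where
rearrangements are free; convergence only matters for cancelling the boundary terms.
-/

open Finset Filter Topology
open scoped ENNReal NNReal

theorem tsum_sum_range_eq_tsum_tsum (f : ℕ → ℕ → ℝ≥0∞) :
    ∑' j, ∑ l ∈ range j, f j l = ∑' l, ∑' c, f (l + c + 1) l := by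
  rw [tsum_eq_zero_add' ENNReal.summable, sum_range_zero, zero_add, ← ENNReal.tsum_prod,
    ← HasAntidiagonal.sigmaAntidiagonalEquivProd.tsum_eq, ENNReal.tsum_sigma']
  refine tsum_congr fun n => ?_
  simp only [HasAntidiagonal.sigmaAntidiagonalEquivProd_apply]
  rw [Finset.tsum_subtype (antidiagonal n) fun p => f (p.1 + p.2 + 1) p.1,
    Nat.sum_antidiagonal_eq_sum_range_succ fun l c => f (l + c + 1) l]
  refine sum_congr rfl fun l hl => ?_
  rw [Nat.add_sub_cancel' (mem_range_succ_iff.mp hl)]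

theorem sum_Icc_pow_mul_pow_add_pow_mul {R : Type*} [CommSemiring R] {x y z : R}
    (h : x * y + x * z = y * z) (p : ℕ) :
    ∑ a ∈ Icc 2 (p + 1), x ^ a * y ^ (p + 2 - a) + x ^ (p + 1) * z = x * y ^ p * z := by
  induction p with
  | zero => simp
  | succ p ih =>
    have hsum : ∑ a ∈ Icc 2 (p + 1), x ^ a * y ^ (p + 3 - a)
        = y * ∑ a ∈ Icc 2 (p + 1), x ^ a * y ^ (p + 2 - a) := by
      rw [mul_sum]
      refine sum_congr rfl fun a ha => ?_
      rw [Nat.sub_add_comm (n := p + 2) (m := 1) (by grind)]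
      ring
    rw [sum_Icc_succ_top (by lia), hsum, show p + 1 + 2 - (p + 1 + 1) = 1 by lia]
    calc _ = y * ∑ a ∈ Icc 2 (p + 1), x ^ a * y ^ (p + 2 - a)
          + x ^ (p + 1) * (x * y + x * z) := by ring
      _ = y * (∑ a ∈ Icc 2 (p + 1), x ^ a * y ^ (p + 2 - a) + x ^ (p + 1) * z) := by
        rw [h]; ring
      _ = x * y ^ (p + 1) * z := by rw [ih]; ring

/-- The reciprocal of the positive integer `i + 1`. The shift lets indices range over all of `ℕ`
without meeting `0⁻¹ = ∞`, and turns the sum of two positive integers into `i + j + 1`. -/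
noncomputable def recip (i : ℕ) : ℝ≥0∞ := ((i + 1 : ℝ≥0)⁻¹ : ℝ≥0)

theorem recip_ne_top (i : ℕ) : recip i ≠ ∞ := ENNReal.coe_ne_top

theorem recip_le_one (i : ℕ) : recip i ≤ 1 := by
  simp [recip]

theorem recip_antitone : Antitone recip := fun i j hij => by
  unfold recip
  gcongr

theorem recip_mul_recip (i j : ℕ) :
    recip (i + j + 1) * recip i + recip (i + j + 1) * recip j = recip i * recip j := by
  unfold recip
  norm_cast
  push_cast
  field_simp
  ring

theorem sum_range_recip_mul_recip_succ_add (l n : ℕ) :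
    ∑ j ∈ range n, recip (l + j) * recip (l + j + 1) + recip (l + n) = recip l := by
  have hstep (m : ℕ) : recip m * recip (m + 1) + recip (m + 1) = recip m := by
    unfold recip
    norm_cast
    push_cast
    field_simp
    ring
  induction n with
  | zero => simp
  | succ n ih => rw [sum_range_succ, add_assoc, ← add_assoc l, hstep, ih]

theorem tendsto_recip_atTop : Tendsto recip atTop (𝓝 0) := by
  have : Tendsto (fun i : ℕ => ((i + 1 : ℝ≥0)⁻¹)) atTop (𝓝 0) := by
    simpa using tendsto_one_div_add_atTop_nhds_zero_nat (𝕜 := ℝ≥0)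
  exact ENNReal.tendsto_coe.mpr this

theorem tsum_recip_mul_recip_succ (l : ℕ) :
    ∑' j, recip (l + j) * recip (l + j + 1) = recip l := by
  have htail : Tendsto (fun n => recip (l + n)) atTop (𝓝 0) := by
    simpa only [add_comm l] using (tendsto_add_atTop_iff_nat l).mpr tendsto_recip_atTop
  have hlim := (ENNReal.tendsto_nat_tsum fun j => recip (l + j) * recip (l + j + 1)).add htail
  simp only [sum_range_recip_mul_recip_succ_add, add_zero] at hlim
  exact tendsto_nhds_unique hlim tendsto_const_nhds

theorem recip_add_mul_recip (i l : ℕ) :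
    recip (i + l + 1) * recip l
      = recip i * ∑ j ∈ range (i + 1), recip (j + l) * recip (j + l + 1) := by
  have htel := sum_range_recip_mul_recip_succ_add l (i + 1)
  rw [show l + (i + 1) = i + l + 1 by ring] at htel
  have hfin : recip (i + l + 1) * recip i ≠ ∞ :=
    ENNReal.mul_ne_top (recip_ne_top _) (recip_ne_top _)
  refine (ENNReal.add_right_inj hfin).mp ?_
  simp only [add_comm _ l]
  rw [add_comm l i, recip_mul_recip, mul_comm (recip (i + l + 1)), ← mul_add,
    add_comm (recip _), htel]

theorem tsum_recip_add_mul_recip (i : ℕ) :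
    ∑' l, recip (i + l + 1) * recip l = recip i * ∑ j ∈ range (i + 1), recip j := by
  simp only [recip_add_mul_recip, ENNReal.tsum_mul_left,
    Summable.tsum_finsetSum fun _ _ => ENNReal.summable, tsum_recip_mul_recip_succ]

/-- The double zeta value `ζ(s, t) = ∑_{m > n ≥ 1} 1 / (mˢ nᵗ)` in `[0, ∞]`, summed over the gaps:
`n = i + 1` and `m = n + (j + 1)`. -/
noncomputable def doubleZeta (s t : ℕ) : ℝ≥0∞ :=
  ∑' i, ∑' j, recip (i + j + 1) ^ s * recip i ^ t

/-- The triple zeta value `ζ(a, b, c) = ∑_{k > m > n ≥ 1} 1 / (kᵃ mᵇ nᶜ)` in `[0, ∞]`, summed over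
the gaps: `n = i + 1`, `m = n + (j + 1)` and `k = m + (l + 1)`. -/
noncomputable def tripleZeta (a b c : ℕ) : ℝ≥0∞ :=
  ∑' i, ∑' j, ∑' l, recip (i + j + l + 2) ^ a * recip (i + j + 1) ^ b * recip i ^ c

/-- The sum `∑_{k > m > n ≥ 1} 1 / (kˢ nᵗ (k - m))`, indexed as in `tripleZeta`. It occurs in both
halves of Hoffman's relation and cancels. -/
noncomputable def gapZeta (s t : ℕ) : ℝ≥0∞ :=
  ∑' i, ∑' j, ∑' l, recip (i + j + l + 2) ^ s * recip i ^ t * recip l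

theorem sum_tripleZeta (S : Finset ℕ) (a b c : ℕ → ℕ) :
    ∑ n ∈ S, tripleZeta (a n) (b n) (c n)
      = ∑' i, ∑' j, ∑' l, ∑ n ∈ S,
          recip (i + j + l + 2) ^ a n * recip (i + j + 1) ^ b n * recip i ^ c n := by
  simp only [tripleZeta, Summable.tsum_finsetSum fun _ _ => ENNReal.summable]

theorem sum_tripleZeta_add_gapZeta (s t : ℕ) :
    ∑ a ∈ Icc 2 (s + 1), tripleZeta a (s + 2 - a) t + gapZeta (s + 1) t
      = ∑' i, ∑' j, recip (i + j + 1) ^ (s + 1) * recip i ^ t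
          * ∑ l ∈ range (i + j + 2), recip l := by
  simp only [sum_tripleZeta, gapZeta, ← ENNReal.tsum_add]
  refine tsum_congr fun i => tsum_congr fun j => ?_
  have hharmonic : ∑' l, recip (i + j + 1 + l + 1) * recip l
      = recip (i + j + 1) * ∑ l ∈ range (i + j + 2), recip l :=
    tsum_recip_add_mul_recip (i + j + 1)
  rw [pow_succ, mul_right_comm _ (recip (i + j + 1)), mul_assoc, ← hharmonic,
    ← ENNReal.tsum_mul_left]
  refine tsum_congr fun l => ?_
  have hgeom := sum_Icc_pow_mul_pow_add_pow_mul (recip_mul_recip (i + j + 1) l) s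
  rw [show i + j + 1 + l + 1 = i + j + l + 2 by ring] at hgeom ⊢
  calc _ = (∑ a ∈ Icc 2 (s + 1), recip (i + j + l + 2) ^ a * recip (i + j + 1) ^ (s + 2 - a)
          + recip (i + j + l + 2) ^ (s + 1) * recip l) * recip i ^ t := by
        rw [add_mul, sum_mul, mul_right_comm]
    _ = _ := by rw [hgeom]; ring

theorem sum_range_recip_add (i j : ℕ) :
    ∑ l ∈ range (i + j + 2), recip l
      = recip (i + j + 1) + recip i + ∑ l ∈ range j, recip (i + l + 1)
        + ∑ l ∈ range i, recip l := by
  rw [sum_range_succ, show i + j + 1 = (i + 1) + j by ring, sum_range_add, sum_range_succ]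
  simp only [add_right_comm]
  ring

theorem tsum_mul_sum_range_recip (s t : ℕ) :
    ∑' i, ∑' j, recip (i + j + 1) ^ s * recip i ^ t * ∑ l ∈ range (i + j + 2), recip l
      = doubleZeta (s + 1) t + doubleZeta s (t + 1) + (tripleZeta s 1 t + tripleZeta s t 1) := by
  have hmid : ∑' i, ∑' j, recip (i + j + 1) ^ s * recip i ^ t * ∑ l ∈ range j, recip (i + l + 1)
      = tripleZeta s 1 t := by
    simp only [mul_sum, tsum_sum_range_eq_tsum_tsum, tripleZeta]
    refine tsum_congr fun i => tsum_congr fun l => tsum_congr fun c => ?_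
    rw [show i + (l + c + 1) + 1 = i + l + c + 2 by ring]
    ring
  have hlow : ∑' i, ∑' j, recip (i + j + 1) ^ s * recip i ^ t * ∑ l ∈ range i, recip l
      = tripleZeta s t 1 := by
    rw [ENNReal.tsum_comm]
    simp only [mul_sum, tsum_sum_range_eq_tsum_tsum, tripleZeta]
    rw [ENNReal.tsum_comm]
    refine tsum_congr fun l => ?_
    rw [ENNReal.tsum_comm]
    refine tsum_congr fun c => tsum_congr fun j => ?_
    rw [show l + c + 1 + j + 1 = l + c + j + 2 by ring, pow_one]
  rw [← hmid, ← hlow]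
  simp only [doubleZeta, ← ENNReal.tsum_add]
  refine tsum_congr fun i => tsum_congr fun j => ?_
  rw [sum_range_recip_add]
  ring

theorem sum_tripleZeta_add_eq_gapZeta (s t : ℕ) :
    ∑ b ∈ Icc 2 (t + 1), tripleZeta s b (t + 2 - b)
        + (tripleZeta s 1 (t + 1) + tripleZeta s (t + 1) 1)
      = gapZeta s (t + 1) := by
  have hlow : tripleZeta s (t + 1) 1
      = ∑' i, ∑' j, ∑' l, recip (i + j + l + 2) ^ s * recip (i + j + 1) ^ (t + 1) * recip j := by
    rw [ENNReal.tsum_comm]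
    simp only [tripleZeta, pow_one, add_comm]
  have hgap : gapZeta s (t + 1)
      = ∑' i, ∑' j, ∑' l, recip (i + j + l + 2) ^ s * recip i ^ (t + 1) * recip j := by
    refine tsum_congr fun i => ?_
    rw [ENNReal.tsum_comm]
    simp only [add_right_comm]
  rw [hlow, hgap, sum_tripleZeta]
  simp only [tripleZeta, ← ENNReal.tsum_add]
  refine tsum_congr fun i => tsum_congr fun j => tsum_congr fun l => ?_
  have hxyz := recip_mul_recip i j
  have hgeom := sum_Icc_pow_mul_pow_add_pow_mul hxyz t
  simp only [mul_assoc, ← mul_sum]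
  generalize recip (i + j + 1) = x at *
  calc _ = recip (i + j + l + 2) ^ s * ((∑ b ∈ Icc 2 (t + 1), x ^ b * recip i ^ (t + 2 - b)
          + x ^ (t + 1) * recip j) + x * recip i ^ (t + 1)) := by ring
    _ = recip (i + j + l + 2) ^ s * (recip i ^ t * (x * recip i + x * recip j)) := by
      rw [hgeom]; ring
    _ = _ := by rw [hxyz]; ring

theorem tsum_recip_rpow_ne_top {p : ℝ} (hp : 1 < p) : ∑' i, recip i ^ p ≠ ∞ := by
  have h : Summable fun i : ℕ => ((i + 1 : ℝ≥0)⁻¹) ^ p := by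
    have := (NNReal.summable_nat_add_iff 1).mpr (NNReal.summable_rpow_inv.mpr hp)
    simpa [NNReal.inv_rpow] using this
  simpa [recip, ENNReal.coe_rpow_of_nonneg _ (zero_le_one.trans hp.le)] using
    ENNReal.tsum_coe_ne_top_iff_summable.mpr h

theorem tripleZeta_ne_top {a b c : ℕ} (ha : 2 ≤ a) (hb : 1 ≤ b) (hc : 1 ≤ c) :
    tripleZeta a b c ≠ ∞ := by
  -- Spreading `1 / (k² m n)` evenly over the three gaps leaves each one the exponent `4 / 3 > 1`.
  set u : ℕ → ℝ≥0∞ := fun i => recip i ^ (1 / 3 : ℝ) with hu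
  have hcube (i : ℕ) : recip i = u i ^ 3 := by
    rw [hu, ← ENNReal.rpow_mul_natCast]
    norm_num
  have hanti : Antitone u := fun i j hij => by
    simp only [hu]
    gcongr
    exact recip_antitone hij
  have hterm (i j l : ℕ) :
      recip (i + j + l + 2) ^ a * recip (i + j + 1) ^ b * recip i ^ c
        ≤ u i ^ 4 * (u j ^ 4 * u l ^ 4) := by
    calc _ ≤ recip (i + j + l + 2) ^ 2 * recip (i + j + 1) ^ 1 * recip i ^ 1 := by
          gcongr ?_ * ?_ * ?_ <;> exact pow_le_pow_right_of_le_one' (recip_le_one _) ‹_›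
      _ = u (i + j + l + 2) * u (i + j + l + 2) * u (i + j + l + 2) ^ 4
          * u (i + j + 1) ^ 3 * u i ^ 3 := by
        simp only [hcube]
        ring
      _ ≤ u i * u j * u l ^ 4 * u j ^ 3 * u i ^ 3 := by
        gcongr <;> apply hanti <;> lia
      _ = u i ^ 4 * (u j ^ 4 * u l ^ 4) := by ring
  have hsum : ∑' i, u i ^ 4 ≠ ∞ := by
    simp only [hu, ← ENNReal.rpow_mul_natCast]
    exact tsum_recip_rpow_ne_top (by norm_num)
  have hle : tripleZeta a b c ≤ ∑' i, ∑' j, ∑' l, u i ^ 4 * (u j ^ 4 * u l ^ 4) :=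
    ENNReal.tsum_le_tsum fun i => ENNReal.tsum_le_tsum fun j => ENNReal.tsum_le_tsum (hterm i j)
  simp only [ENNReal.tsum_mul_left, ENNReal.tsum_mul_right] at hle
  exact ne_top_of_le_ne_top (ENNReal.mul_ne_top hsum (ENNReal.mul_ne_top hsum hsum)) hle

theorem sum_tripleZeta_add_sum_tripleZeta {s t : ℕ} (hs : 2 ≤ s) (ht : 1 ≤ t) :
    ∑ a ∈ Icc 2 s, tripleZeta a (s + 1 - a) t + ∑ b ∈ Icc 2 t, tripleZeta s b (t + 1 - b)
      = doubleZeta (s + 1) t + doubleZeta s (t + 1) := by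
  obtain ⟨s, rfl⟩ := Nat.exists_eq_add_of_le' (one_le_two.trans hs)
  obtain ⟨t, rfl⟩ := Nat.exists_eq_add_of_le' ht
  have hfin : tripleZeta (s + 1) 1 (t + 1) + tripleZeta (s + 1) (t + 1) 1 ≠ ∞ :=
    ENNReal.add_ne_top.mpr ⟨tripleZeta_ne_top hs le_rfl ht, tripleZeta_ne_top hs ht le_rfl⟩
  refine (ENNReal.add_left_inj hfin).mp ?_
  rw [add_assoc, sum_tripleZeta_add_eq_gapZeta, sum_tripleZeta_add_gapZeta,
    tsum_mul_sum_range_recip]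

theorem mzv_eq_toReal_tsum {d : ℕ} (s : Fin d → ℕ) :
    mzv s = (∑' k : {k : Fin d → ℕ // StrictAnti k ∧ ∀ i, 0 < k i},
      ∏ i, recip (k.1 i - 1) ^ s i).toReal := by
  rw [ENNReal.tsum_toReal_eq fun k => ENNReal.prod_ne_top fun i _ =>
    ENNReal.pow_ne_top (recip_ne_top _)]
  refine tsum_congr fun k => ?_
  rw [ENNReal.toReal_prod]
  refine prod_congr rfl fun i _ => ?_
  have hcast : ((k.1 i - 1 : ℕ) : ℝ) + 1 = k.1 i := by
    exact_mod_cast Nat.sub_add_cancel (k.2.2 i)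
  rw [ENNReal.toReal_pow, recip, ENNReal.coe_toReal, NNReal.coe_inv, NNReal.coe_add,
    NNReal.coe_natCast, NNReal.coe_one, hcast, one_div, inv_pow]

/-- The pairs `m > n ≥ 1` in bijection with their gaps, with `n = i + 1` and `m = n + (j + 1)`. -/
def gapEquivTwo : ℕ × ℕ ≃ {k : Fin 2 → ℕ // StrictAnti k ∧ ∀ i, 0 < k i} where
  toFun p := ⟨![p.1 + p.2 + 2, p.1 + 1], by
    simp [Fin.strictAnti_iff_succ_lt, Fin.forall_fin_succ]⟩
  invFun k := (k.1 1 - 1, k.1 0 - k.1 1 - 1)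
  left_inv p := by ext <;> simp; lia
  right_inv := fun ⟨k, hanti, hpos⟩ => by
    have h10 := hanti (show (0 : Fin 2) < 1 by decide)
    have h1 := hpos 1
    ext i
    fin_cases i <;> simp <;> lia

/-- The triples `k > m > n ≥ 1` in bijection with their gaps, with `n = i + 1`, `m = n + (j + 1)`
and `k = m + (l + 1)`. -/
def gapEquivThree : ℕ × ℕ × ℕ ≃ {k : Fin 3 → ℕ // StrictAnti k ∧ ∀ i, 0 < k i} where
  toFun p := ⟨![p.1 + p.2.1 + p.2.2 + 3, p.1 + p.2.1 + 2, p.1 + 1], by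
    simp [Fin.strictAnti_iff_succ_lt, Fin.forall_fin_succ]⟩
  invFun k := (k.1 2 - 1, k.1 1 - k.1 2 - 1, k.1 0 - k.1 1 - 1)
  left_inv p := by ext <;> simp <;> lia
  right_inv := fun ⟨k, hanti, hpos⟩ => by
    have h10 := hanti (show (0 : Fin 3) < 1 by decide)
    have h21 := hanti (show (1 : Fin 3) < 2 by decide)
    have h2 := hpos 2
    ext i
    fin_cases i <;> simp <;> lia

theorem mzv_eq_toReal_doubleZeta (s t : ℕ) : mzv ![s, t] = (doubleZeta s t).toReal := by
  rw [mzv_eq_toReal_tsum, ← gapEquivTwo.tsum_eq, ENNReal.tsum_prod', doubleZeta]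
  simp [gapEquivTwo, Fin.prod_univ_two]

theorem mzv_eq_toReal_tripleZeta (a b c : ℕ) : mzv ![a, b, c] = (tripleZeta a b c).toReal := by
  rw [mzv_eq_toReal_tsum, ← gapEquivThree.tsum_eq, ENNReal.tsum_prod', tripleZeta]
  simp only [ENNReal.tsum_prod']
  simp [gapEquivThree, Fin.prod_univ_three]

theorem mzv_hoffman_relation_depth_two {s t : ℕ} (hs : 2 ≤ s) (ht : 1 ≤ t) :
    ∑ a ∈ Icc 2 s, mzv ![a, s + 1 - a, t] + ∑ b ∈ Icc 2 t, mzv ![s, b, t + 1 - b]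
      = mzv ![s + 1, t] + mzv ![s, t + 1] := by
  have hleft : ∀ a ∈ Icc 2 s, tripleZeta a (s + 1 - a) t ≠ ∞ := fun a ha =>
    tripleZeta_ne_top (mem_Icc.mp ha).1 (by grind) ht
  have hright : ∀ b ∈ Icc 2 t, tripleZeta s b (t + 1 - b) ≠ ∞ := fun b hb =>
    tripleZeta_ne_top hs (by grind) (by grind)
  have hrel := sum_tripleZeta_add_sum_tripleZeta hs ht
  have hdouble : doubleZeta (s + 1) t + doubleZeta s (t + 1) ≠ ∞ := by
    rw [← hrel]
    exact ENNReal.add_ne_top.mpr ⟨ENNReal.sum_ne_top.mpr hleft, ENNReal.sum_ne_top.mpr hright⟩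
  obtain ⟨hdouble₁, hdouble₂⟩ := ENNReal.add_ne_top.mp hdouble
  simp only [mzv_eq_toReal_doubleZeta, mzv_eq_toReal_tripleZeta]
  rw [← ENNReal.toReal_add hdouble₁ hdouble₂, ← hrel, ENNReal.toReal_add
    (ENNReal.sum_ne_top.mpr hleft) (ENNReal.sum_ne_top.mpr hright),
    ENNReal.toReal_sum hleft, ENNReal.toReal_sum hright]

theorem sum_ab2_and_2bc (u : ℕ) (hu : 3 ≤ u) (q : ℕ) (hq : q = u - 1) :
    ((∑ a ∈ Finset.Icc 2 (u - 1), mzv ![a, u - a, 2])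
        = mzv ![u, 2] + mzv ![q, 3] - mzv ![q, 2, 1])
    ∧ ((∑ b ∈ Finset.Icc 1 (u - 1), mzv ![2, b, u - b])
        = mzv ![3, q] + mzv ![2, u]) := by
  obtain rfl : u = q + 1 := by lia
  have hq2 : 2 ≤ q := by lia
  rw [Nat.add_sub_cancel]
  constructor
  · have hrel := mzv_hoffman_relation_depth_two hq2 one_le_two
    rw [Icc_self, sum_singleton] at hrel
    exact eq_sub_of_add_eq hrel
  · have hrel := mzv_hoffman_relation_depth_two le_rfl (one_le_two.trans hq2)
    rw [Icc_self, sum_singleton] at hrel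
    rw [← add_sum_Ioc_eq_sum_Icc (one_le_two.trans hq2)]
    exact hrel
end
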